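/- arXiv:math/0206211 — 2 statements merged into one kernel-verified Lean document; each statement's English description precedes it below -/
import Mathlib

section
/- Let A = (a_{pq}) be a generic n×n matrix over the quaternions ℍ and fix indices i, j. Let P = Σ_B (−1)^{K(B)−1} ν(B^c) π_{ij}(B), the sum over all square submatrices B of A containing the entry a_{ij} (B given by a row set S ∋ i and column set T ∋ j with |S| = |T| = K(B), and B^c the complementary submatrix on the rows not in S and columns not in T). Then ν(A) ν(A^{ij}) = P · P̄, where P̄ is the quaternionic conjugate of P. -/
/-!
The norm `ν` is the Study determinant `sdet`, i.e. the determinant of the complex matrix obtained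
from the embedding of `ℍ` in the `2 × 2` complex matrices (`nuMat_eq_sdet`). By the Schur complement
formula, `ν(A) = ν(|A|_{ij}) ν(A^{ij})` for every entry `(i, j)` (`sdet_subMat`). It therefore
suffices to show `P = ν(A^{ij}) |A|_{ij}`: then `P P̄ = ν(A^{ij})² ν(|A|_{ij}) = ν(A) ν(A^{ij})`.

That identity (`sdet_mul_qdet_eq_altSum`) is proved by induction on the size. Write `D = A^{ij}`.
The entries of `D⁻¹` are `|D|_{pq}⁻¹`, and `ν(D) |D|_{pq}⁻¹` is the conjugate of
`ν(D^{pq}) |D|_{pq}`. Hence `ν(D) |A|_{ij}` equals `ν(D) a_{ij}` minus the sum over `p`, `q` of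
`a_{iq} x̄_{pq} a_{pj}` with `x_{pq} = ν(D^{pq}) |D|_{pq}`. The sum `P` satisfies the same recursion
(`altSum_rec`), because conjugating a monomial of a double permanent reverses it, and `a_{iq}`,
`a_{pj}` extend the reversed monomial at its two ends (`zigzag_reverse`).
-/

open Matrix

variable {R : Type*} [Ring R]

/-- The submatrix of `A` obtained by deleting row `i` and column `j`,
with rows and columns retaining their original labels. -/
def delSub {I J : Type*} (A : Matrix I J R) (i : I) (j : J) :
    Matrix {p : I // p ≠ i} {q : J // q ≠ j} R :=
  A.submatrix Subtype.val Subtype.val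

/-- A (possibly rectangular-typed) matrix is invertible if it has a two-sided inverse. -/
def HasTwoSidedInv {I J : Type*} [Fintype I] [Fintype J] [DecidableEq I] [DecidableEq J]
    (M : Matrix I J R) : Prop :=
  ∃ B : Matrix J I R, M * B = 1 ∧ B * M = 1

/-- The quasideterminant `|A|_{ij}` is defined iff `A^{ij}` is invertible. -/
def QdetDefined {I J : Type*} [Fintype I] [Fintype J] [DecidableEq I] [DecidableEq J]
    (A : Matrix I J R) (i : I) (j : J) : Prop :=
  HasTwoSidedInv (delSub A i j)

/- The quasideterminant `|A|_{ij} = a_{ij} - r_i^j (A^{ij})⁻¹ c_j^i` (junk value `0`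
if `A^{ij}` is not invertible). -/
open Classical in
noncomputable def qdet {I J : Type*} [Fintype I] [Fintype J] [DecidableEq I] [DecidableEq J]
    (A : Matrix I J R) (i : I) (j : J) : R :=
  if h : QdetDefined A i j then
    A i j - ∑ p : {p : I // p ≠ i}, ∑ q : {q : J // q ≠ j},
      A i q.val * (Exists.choose h) q p * A p.val j
  else 0

/-- A square matrix is generic if all of its square submatrices (including itself)
are invertible. -/
def Generic {n : ℕ} (A : Matrix (Fin n) (Fin n) R) : Prop :=
  ∀ S T : Finset (Fin n), S.card = T.card →
    HasTwoSidedInv (A.submatrix (Subtype.val : {p : Fin n // p ∈ S} → Fin n)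
      (Subtype.val : {q : Fin n // q ∈ T} → Fin n))

open scoped Quaternion

/-- `y_k(C) = |C^{1…k−1,1…k−1}|_{kk}`, the `(k,k)`-quasideterminant of the submatrix of `C`
on rows and columns `k, …, m`. -/
noncomputable def ykQdet {R : Type*} [Ring R] {m : ℕ} (C : Matrix (Fin m) (Fin m) R)
    (k : Fin m) : R :=
  qdet (C.submatrix (Subtype.val : {p : Fin m // k ≤ p} → Fin m)
    (Subtype.val : {q : Fin m // k ≤ q} → Fin m)) ⟨k, le_refl k⟩ ⟨k, le_refl k⟩

/-- The norm `ν(C) = Π_k ν(y_k(C)) ∈ ℝ` of a square quaternionic matrix. -/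
noncomputable def nuMat {m : ℕ} (C : Matrix (Fin m) (Fin m) ℍ[ℝ]) : ℝ :=
  ∏ k : Fin m, Quaternion.normSq (ykQdet C k)

/-- The norm of the square submatrix of `A` on rows `S` and columns `T` (each taken in
increasing order); junk value `0` if `S.card ≠ T.card`. -/
noncomputable def nuOfSub {n : ℕ} (A : Matrix (Fin n) (Fin n) ℍ[ℝ])
    (S T : Finset (Fin n)) : ℝ :=
  if h : S.card = T.card then
    nuMat (Matrix.of fun p q : Fin S.card =>
      A ((S.orderIsoOfFin rfl p : Fin n)) ((T.orderIsoOfFin h.symm q : Fin n)))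
  else 0

/-- The monomial `m_{I,J}(B) = a_{i₁j₂} ā_{i₂j₂} a_{i₂j₃} ⋯ ā_{i_kj_k} a_{i_kj₁}`
(`= a_{i₁j₁}` when `k = 1`) attached to orderings `LI = (i₁,…,i_k)`, `LJ = (j₁,…,j_k)`;
the entries are taken from the ambient matrix `A`. -/
noncomputable def listMono {n : ℕ} (A : Matrix (Fin n) (Fin n) ℍ[ℝ]) (i j : Fin n)
    (LI LJ : List (Fin n)) : ℍ[ℝ] :=
  (((List.range (LI.length - 1)).map (fun t =>
      A (LI.getD t i) (LJ.getD (t + 1) j) * star (A (LI.getD (t + 1) i) (LJ.getD (t + 1) j)))).prod)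
    * A (LI.getD (LI.length - 1) i) (LJ.getD 0 j)

/-- The `(i,j)`-th double permanent `π_{ij}(B)` of the submatrix `B` of `A` on rows `S` and
columns `T`: the sum of `m_{I,J}(B)` over all orderings `I` of `S` with `i₁ = i` and all
orderings `J` of `T` with `j₁ = j`. -/
noncomputable def dperm {n : ℕ} (A : Matrix (Fin n) (Fin n) ℍ[ℝ]) (i j : Fin n)
    (S T : Finset (Fin n)) : ℍ[ℝ] :=
  ((S.toList.permutations.filter (fun L => L.head? = some i)).map (fun LI =>
    ((T.toList.permutations.filter (fun L => L.head? = some j)).map (fun LJ =>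
      listMono A i j LI LJ)).sum)).sum

set_option linter.unusedSectionVars false

/-! ### The Study determinant and quasideterminants -/

section Study

variable {I J K L : Type*} [Fintype I] [Fintype J] [Fintype K] [Fintype L]
  [DecidableEq I] [DecidableEq J] [DecidableEq K] [DecidableEq L]

/-- The standard embedding of `ℍ` in the complex `2 × 2` matrices. -/
noncomputable def quatRep : ℍ[ℝ] →+* Matrix (Fin 2) (Fin 2) ℂ where
  toFun q := !![⟨q.re, q.imI⟩, ⟨q.imJ, q.imK⟩; ⟨-q.imJ, q.imK⟩, ⟨q.re, -q.imI⟩]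
  map_one' := by
    ext a b; fin_cases a <;> fin_cases b <;> simp [Complex.ext_iff]
  map_zero' := by
    ext a b; fin_cases a <;> fin_cases b <;> simp [Complex.ext_iff]
  map_add' x y := by
    ext a b; fin_cases a <;> fin_cases b <;> simp [Complex.ext_iff] <;> ring
  map_mul' x y := by
    ext a b
    fin_cases a <;> fin_cases b <;>
      simp [Complex.ext_iff, Matrix.mul_apply] <;> constructor <;> ring

theorem det_quatRep (q : ℍ[ℝ]) : (quatRep q).det = ((Quaternion.normSq q : ℝ) : ℂ) := by
  rw [Matrix.det_fin_two, Quaternion.normSq_def']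
  simp [quatRep, Complex.ext_iff, pow_two]
  constructor <;> ring

/-- The complex matrix obtained by replacing every quaternionic entry by its `2 × 2` block. -/
noncomputable def rep (M : Matrix I J ℍ[ℝ]) : Matrix (I × Fin 2) (J × Fin 2) ℂ :=
  Matrix.of fun x y => quatRep (M x.1 y.1) x.2 y.2

theorem rep_mul (M : Matrix I J ℍ[ℝ]) (N : Matrix J K ℍ[ℝ]) : rep (M * N) = rep M * rep N := by
  ext x y
  simp only [rep, Matrix.of_apply, Matrix.mul_apply, map_sum, map_mul, Matrix.sum_apply,
    Fintype.sum_prod_type]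

theorem rep_sub (M N : Matrix I J ℍ[ℝ]) : rep (M - N) = rep M - rep N := by
  ext x y
  simp [rep]

theorem rep_one : rep (1 : Matrix I I ℍ[ℝ]) = 1 := by
  ext ⟨a, b⟩ ⟨c, d⟩
  by_cases h : a = c
  · subst h; simp [rep, Matrix.one_apply]
  · simp [rep, Matrix.one_apply, h]

/-- Up to absolute value, the determinant of a matrix whose rows and columns are indexed by
different types does not depend on how the two types are identified with a third one. -/
theorem norm_det_submatrix_equiv (M : Matrix I J ℂ) (e : K ≃ I) (f : K ≃ J)
    (e' : L ≃ I) (f' : L ≃ J) :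
    ‖(M.submatrix e f).det‖ = ‖(M.submatrix e' f').det‖ := by
  have h : M.submatrix e f = ((M.submatrix e' f').submatrix (e.trans e'.symm)
      (e.trans e'.symm)).submatrix id (f.trans (f'.symm.trans (e'.trans e.symm)) : Equiv.Perm K) := by
    ext a b; simp
  rw [h, Matrix.det_permute', Matrix.det_submatrix_equiv_self, norm_mul]
  rcases Int.units_eq_one_or
    (Equiv.Perm.sign (f.trans (f'.symm.trans (e'.trans e.symm)) : Equiv.Perm K)) with h | h <;>
  rw [h] <;> simp

/- The Study determinant of a quaternionic matrix, as the absolute value of the determinant of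
its complexification. Rows and columns may be indexed by different types; they are identified by
an arbitrary bijection, which does not affect the value. Junk value `0` if there is none. -/
open Classical in
noncomputable def sdet (M : Matrix I J ℍ[ℝ]) : ℝ :=
  if h : Nonempty (I ≃ J) then ‖(rep (M.submatrix id h.some)).det‖ else 0

theorem sdet_eq (M : Matrix I J ℍ[ℝ]) (e : K ≃ I) (f : K ≃ J) :
    sdet M = ‖(rep (M.submatrix e f)).det‖ := by
  have h : Nonempty (I ≃ J) := ⟨e.symm.trans f⟩
  rw [sdet, dif_pos h]
  exact norm_det_submatrix_equiv (rep M) ((Equiv.refl I).prodCongr (Equiv.refl (Fin 2)))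
    (h.some.prodCongr (Equiv.refl (Fin 2))) (e.prodCongr (Equiv.refl (Fin 2)))
    (f.prodCongr (Equiv.refl (Fin 2)))

theorem sdet_submatrix (M : Matrix I J ℍ[ℝ]) (e : K ≃ I) (f : L ≃ J) :
    sdet (M.submatrix e f) = sdet M := by
  by_cases h : Nonempty (K ≃ L)
  · rw [sdet_eq (M.submatrix e f) (Equiv.refl K) h.some, sdet_eq M e (h.some.trans f)]
    rfl
  · have h' : ¬ Nonempty (I ≃ J) := fun ⟨g⟩ => h ⟨e.trans (g.trans f.symm)⟩
    rw [sdet, dif_neg h, sdet, dif_neg h']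

theorem sdet_empty [IsEmpty I] [IsEmpty J] (M : Matrix I J ℍ[ℝ]) : sdet M = 1 := by
  rw [sdet_eq M (Equiv.refl I) (Equiv.equivOfIsEmpty I J), Matrix.det_isEmpty, norm_one]

/-- The quasideterminant computed with any given inverse of the complementary minor. -/
theorem qdet_eq {R : Type*} [Ring R] (M : Matrix I J R) (i : I) (j : J)
    (B : Matrix {q : J // q ≠ j} {p : I // p ≠ i} R)
    (h₁ : delSub M i j * B = 1) (h₂ : B * delSub M i j = 1) :
    qdet M i j = M i j - ∑ p : {p : I // p ≠ i}, ∑ q : {q : J // q ≠ j},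
      M i q.val * B q p * M p.val j := by
  have h : QdetDefined M i j := ⟨B, h₁, h₂⟩
  have hB : Exists.choose h = B := by
    have := (Exists.choose_spec h).2
    calc Exists.choose h = Exists.choose h * (delSub M i j * B) := by rw [h₁, Matrix.mul_one]
      _ = B := by rw [← Matrix.mul_assoc, this, Matrix.one_mul]
  rw [qdet, dif_pos h, hB]

/-- The `(j, i)` entry of the inverse of `M` is inverse to `|M|_{ij}`: solve row `j` of `N * M = 1`
for the entries `N j p`, `p ≠ i`, in terms of `N j i`. -/
theorem inv_mul_qdet {R : Type*} [Ring R] (M : Matrix I J R) (i : I) (j : J) (N : Matrix J I R)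
    (hN : N * M = 1) (h : QdetDefined M i j) : N j i * qdet M i j = 1 := by
  obtain ⟨B, h₁, h₂⟩ := h
  rw [qdet_eq M i j B h₁ h₂]
  have split : ∀ c : J, N j i * M i c + ∑ p : {p : I // p ≠ i}, N j p * M p c
      = (1 : Matrix J J R) j c := by
    intro c
    rw [← hN, Matrix.mul_apply, Fintype.sum_eq_add_sum_subtype_ne _ i]
  have row : ∀ p : {p : I // p ≠ i},
      N j p = - ∑ q : {q : J // q ≠ j}, N j i * M i q * B q p := by
    intro p
    have : ∑ q : {q : J // q ≠ j},
        (N j i * M i q + ∑ p : {p : I // p ≠ i}, N j p * M p q) * B q p = 0 := by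
      refine Finset.sum_eq_zero fun q _ => ?_
      rw [split, Matrix.one_apply_ne q.2.symm, zero_mul]
    simp_rw [add_mul, Finset.sum_add_distrib, Finset.sum_mul] at this
    rw [Finset.sum_comm (f := fun (q : {q : J // q ≠ j}) (r : {p : I // p ≠ i}) =>
      N j r * M r q * B q p)] at this
    have e : ∀ r : {p : I // p ≠ i}, ∑ q : {q : J // q ≠ j}, N j r * M r q * B q p
        = N j r * (1 : Matrix {p : I // p ≠ i} {p : I // p ≠ i} R) r p := by
      intro r
      rw [← h₁, Matrix.mul_apply, Finset.mul_sum]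
      simp [delSub, mul_assoc]
    simp_rw [e] at this
    simp only [Matrix.one_apply, mul_ite, mul_one, mul_zero, Finset.sum_ite_eq',
      Finset.mem_univ, if_true] at this
    exact eq_neg_of_add_eq_zero_right this
  have hj := split j
  rw [Matrix.one_apply_eq] at hj
  rw [← hj, mul_sub, sub_eq_add_neg, Finset.mul_sum, ← Finset.sum_neg_distrib]
  congr 1
  refine Finset.sum_congr rfl fun p _ => ?_
  rw [row p, neg_mul, Finset.sum_mul, Finset.mul_sum]
  simp [mul_assoc]

theorem delSub_submatrix {R : Type*} [Ring R] (M : Matrix I J R) (e : K ≃ I) (f : L ≃ J)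
    (i : K) (j : L) :
    delSub (M.submatrix e f) i j = (delSub M (e i) (f j)).submatrix
      (e.subtypeEquiv (fun _ => (e.injective.ne_iff).symm) : {p // p ≠ i} ≃ {p // p ≠ e i})
      (f.subtypeEquiv (fun _ => (f.injective.ne_iff).symm) : {p // p ≠ j} ≃ {p // p ≠ f j}) :=
  rfl

theorem HasTwoSidedInv.submatrix {R : Type*} [Ring R] {M : Matrix I J R} (h : HasTwoSidedInv M)
    (e : K ≃ I) (f : L ≃ J) : HasTwoSidedInv (M.submatrix e f) := by
  obtain ⟨B, h₁, h₂⟩ := h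
  refine ⟨B.submatrix f e, ?_, ?_⟩
  · rw [Matrix.submatrix_mul_equiv, h₁, Matrix.submatrix_one_equiv]
  · rw [Matrix.submatrix_mul_equiv, h₂, Matrix.submatrix_one_equiv]

theorem qdet_submatrix {R : Type*} [Ring R] (M : Matrix I J R) (e : K ≃ I) (f : L ≃ J)
    (i : K) (j : L) (h : QdetDefined M (e i) (f j)) :
    qdet (M.submatrix e f) i j = qdet M (e i) (f j) := by
  obtain ⟨B, h₁, h₂⟩ := h
  set e' : {p // p ≠ i} ≃ {p // p ≠ e i} := e.subtypeEquiv (fun _ => (e.injective.ne_iff).symm)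
  set f' : {p // p ≠ j} ≃ {p // p ≠ f j} := f.subtypeEquiv (fun _ => (f.injective.ne_iff).symm)
  rw [qdet_eq M _ _ B h₁ h₂, qdet_eq _ i j (B.submatrix f' e')
    (by rw [delSub_submatrix, Matrix.submatrix_mul_equiv, h₁, Matrix.submatrix_one_equiv])
    (by rw [delSub_submatrix, Matrix.submatrix_mul_equiv, h₂, Matrix.submatrix_one_equiv])]
  congr 1
  refine Fintype.sum_equiv e' _ _ fun p => Fintype.sum_equiv f' _ _ fun q => rfl

/-- Schur complement formula: the quasideterminant is the Schur complement of the minor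
`M^{ij}`. -/
theorem sdet_eq_normSq_qdet_mul (M : Matrix I J ℍ[ℝ]) (i : I) (j : J)
    (g : {p : I // p ≠ i} ≃ {q : J // q ≠ j}) (h : QdetDefined M i j) :
    sdet M = Quaternion.normSq (qdet M i j) * sdet (delSub M i j) := by
  obtain ⟨B, h₁, h₂⟩ := h
  let e : Unit ⊕ {p : I // p ≠ i} ≃ I :=
    (Equiv.sumCongr (Equiv.ofUnique Unit {p : I // p = i}) (Equiv.refl _)).trans
      (Equiv.sumCompl (fun p => p = i))
  let f₀ : Unit ⊕ {q : J // q ≠ j} ≃ J :=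
    (Equiv.sumCongr (Equiv.ofUnique Unit {p : J // p = j}) (Equiv.refl _)).trans
      (Equiv.sumCompl (fun p => p = j))
  let f : Unit ⊕ {p : I // p ≠ i} ≃ J := (Equiv.sumCongr (Equiv.refl _) g).trans f₀
  let a : Matrix Unit Unit ℍ[ℝ] := Matrix.of fun _ _ => M i j
  let b : Matrix Unit {p : I // p ≠ i} ℍ[ℝ] := Matrix.of fun _ q => M i (g q)
  let c : Matrix {p : I // p ≠ i} Unit ℍ[ℝ] := Matrix.of fun p _ => M p j
  let D : Matrix {p : I // p ≠ i} {p : I // p ≠ i} ℍ[ℝ] := (delSub M i j).submatrix id g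
  let C : Matrix {p : I // p ≠ i} {p : I // p ≠ i} ℍ[ℝ] := B.submatrix g id
  have hDC : D * C = 1 := by
    change (delSub M i j).submatrix id g * B.submatrix g id = 1
    rw [Matrix.submatrix_mul_equiv, h₁, Matrix.submatrix_id_id]
  have hCD : C * D = 1 := by
    have := Matrix.submatrix_mul_equiv B (delSub M i j) g (Equiv.refl _) g
    change B.submatrix g (Equiv.refl _) * (delSub M i j).submatrix (Equiv.refl _) g = 1
    rw [this, h₂, Matrix.submatrix_one_equiv]
  have hblock : (rep (M.submatrix e f)).submatrix (Equiv.sumProdDistrib _ _ (Fin 2)).symm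
      (Equiv.sumProdDistrib _ _ (Fin 2)).symm
      = Matrix.fromBlocks (rep a) (rep b) (rep c) (rep D) := by
    ext x y
    rcases x with ⟨x, x'⟩ | ⟨x, x'⟩ <;> rcases y with ⟨y, y'⟩ | ⟨y, y'⟩ <;> rfl
  have hinv : Invertible (rep D) :=
    ⟨rep C, by rw [← rep_mul, hCD, rep_one], by rw [← rep_mul, hDC, rep_one]⟩
  have hC : ⅟(rep D) = rep C := by
    apply invOf_eq_right_inv
    rw [← rep_mul, hDC, rep_one]
  have hq : rep a - rep b * ⅟(rep D) * rep c
      = rep (Matrix.of fun _ _ : Unit => qdet M i j) := by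
    rw [hC, ← rep_mul, ← rep_mul, ← rep_sub]
    congr 1
    ext1 x y
    rw [qdet_eq M i j B h₁ h₂]
    simp only [Matrix.sub_apply, Matrix.mul_apply, Matrix.of_apply, a, b, c, C,
      Matrix.submatrix_apply, id, Finset.sum_mul]
    congr 1
    refine Finset.sum_congr rfl fun p _ => ?_
    exact Fintype.sum_equiv g _ _ fun q => rfl
  have hunit : (rep (Matrix.of fun _ _ : Unit => qdet M i j)).det
      = ((Quaternion.normSq (qdet M i j) : ℝ) : ℂ) := by
    rw [← det_quatRep, ← Matrix.det_submatrix_equiv_self (Equiv.punitProd (Fin 2)).symm]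
    rfl
  rw [sdet_eq M e f, sdet_eq (delSub M i j) (Equiv.refl _) g,
    ← Matrix.det_submatrix_equiv_self (Equiv.sumProdDistrib _ _ (Fin 2)).symm, hblock,
    Matrix.det_fromBlocks₂₂, hq, hunit, norm_mul, mul_comm, Complex.norm_real,
    Real.norm_of_nonneg Quaternion.normSq_nonneg]
  rfl

end Study

/-! ### Orderings, alternating monomials and their sums -/

section Combinatorics

variable {n : ℕ}

/-- The orderings of a finite set, as duplicate-free lists. -/
noncomputable def ords (S : Finset (Fin n)) : Finset (List (Fin n)) := S.toList.permutations.toFinset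

theorem mem_permutations_toList {S : Finset (Fin n)} {L : List (Fin n)} :
    L ∈ S.toList.permutations ↔ L.Nodup ∧ ∀ a, a ∈ L ↔ a ∈ S := by
  rw [List.mem_permutations]
  constructor
  · intro h
    exact ⟨h.nodup_iff.2 S.nodup_toList, fun a => by rw [h.mem_iff, Finset.mem_toList]⟩
  · rintro ⟨h₁, h₂⟩
    exact (List.perm_ext_iff_of_nodup h₁ S.nodup_toList).2 fun a => by
      rw [h₂, Finset.mem_toList]

theorem mem_ords {S : Finset (Fin n)} {L : List (Fin n)} :
    L ∈ ords S ↔ L.Nodup ∧ ∀ a, a ∈ L ↔ a ∈ S := by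
  rw [ords, List.mem_toFinset, mem_permutations_toList]

theorem length_of_mem_ords {S : Finset (Fin n)} {L : List (Fin n)} (h : L ∈ ords S) :
    L.length = S.card := by
  rw [ords, List.mem_toFinset, List.mem_permutations] at h
  rw [h.length_eq, Finset.length_toList]

theorem ords_empty : ords (∅ : Finset (Fin n)) = {[]} := by
  ext L
  rw [mem_ords, Finset.mem_singleton]
  constructor
  · rintro ⟨-, h⟩
    exact List.eq_nil_iff_forall_not_mem.2 fun a ha => by simpa using (h a).1 ha
  · rintro rfl; simp

theorem cons_mem_ords {S : Finset (Fin n)} {i : Fin n} {L : List (Fin n)} :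
    i :: L ∈ ords S ↔ i ∈ S ∧ L ∈ ords (S.erase i) := by
  simp only [mem_ords, List.nodup_cons, List.mem_cons, Finset.mem_erase]
  constructor
  · rintro ⟨⟨h₁, h₂⟩, h₃⟩
    refine ⟨(h₃ i).1 (Or.inl rfl), h₂, fun a => ⟨fun ha => ⟨?_, (h₃ a).1 (Or.inr ha)⟩, ?_⟩⟩
    · rintro rfl; exact h₁ ha
    · rintro ⟨ha, ha'⟩
      exact ((h₃ a).2 ha').resolve_left ha
  · rintro ⟨h₁, h₂, h₃⟩
    refine ⟨⟨fun h => ((h₃ i).1 h).1 rfl, h₂⟩, fun a => ⟨?_, fun ha => ?_⟩⟩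
    · rintro (rfl | ha)
      · exact h₁
      · exact ((h₃ a).1 ha).2
    · by_cases hai : a = i
      · exact Or.inl hai
      · exact Or.inr ((h₃ a).2 ⟨hai, ha⟩)

theorem sum_ords_reverse (S : Finset (Fin n)) (f : List (Fin n) → ℍ[ℝ]) :
    ∑ L ∈ ords S, f L.reverse = ∑ L ∈ ords S, f L := by
  refine Finset.sum_nbij' List.reverse List.reverse ?_ ?_ ?_ ?_ ?_ <;>
    simp [mem_ords]

theorem sum_ords_cons {S : Finset (Fin n)} (hS : S.Nonempty) (f : List (Fin n) → ℍ[ℝ]) :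
    ∑ L ∈ ords S, f L = ∑ p ∈ S, ∑ L ∈ ords (S.erase p), f (p :: L) := by
  rw [Finset.sum_sigma']
  symm
  refine Finset.sum_bij (fun x _ => x.1 :: x.2) ?_ ?_ ?_ ?_
  · rintro ⟨p, L⟩ h
    rw [Finset.mem_sigma] at h
    exact cons_mem_ords.2 h
  · rintro ⟨p, L⟩ _ ⟨p', L'⟩ _ h
    simp only [List.cons.injEq] at h
    obtain ⟨rfl, rfl⟩ := h
    rfl
  · intro L hL
    cases L with
    | nil =>
      obtain ⟨a, ha⟩ := hS
      simpa using ((mem_ords.1 hL).2 a).2 ha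
    | cons p L => exact ⟨⟨p, L⟩, Finset.mem_sigma.2 (cons_mem_ords.1 hL), rfl⟩
  · intros; rfl

/-- Orderings of `S` that begin with `i` correspond to orderings of `S \ {i}`. -/
theorem sum_filter_head {S : Finset (Fin n)} {i : Fin n} (hi : i ∈ S)
    (f : List (Fin n) → ℍ[ℝ]) :
    ((S.toList.permutations.filter (fun L => L.head? = some i)).map f).sum
      = ∑ L ∈ ords (S.erase i), f (i :: L) := by
  rw [← List.sum_toFinset f ((List.nodup_permutations _ S.nodup_toList).filter _)]
  symm
  refine Finset.sum_bij (fun L _ => i :: L) ?_ ?_ ?_ ?_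
  · intro L hL
    rw [List.mem_toFinset, List.mem_filter]
    exact ⟨List.mem_toFinset.1 (cons_mem_ords.2 ⟨hi, hL⟩), by simp⟩
  · intro L _ L' _ h
    exact (List.cons.inj h).2
  · intro L hL
    rw [List.mem_toFinset, List.mem_filter] at hL
    cases L with
    | nil => simp at hL
    | cons p L =>
      obtain ⟨h₁, h₂⟩ := hL
      have hp : p = i := by simpa using h₂
      subst hp
      exact ⟨L, (cons_mem_ords.1 (List.mem_toFinset.2 h₁)).2, rfl⟩
  · intros; rfl

/-- The alternating monomial `a_{i c₁} ā_{r₁ c₁} a_{r₁ c₂} ā_{r₂ c₂} ⋯ ā_{r_k c_k} a_{r_k j}` for row and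
column lists `(r₁, …, r_k)` and `(c₁, …, c_k)`; meaningful for lists of equal length only. -/
noncomputable def zigzag (A : Matrix (Fin n) (Fin n) ℍ[ℝ]) (j : Fin n) :
    Fin n → List (Fin n) → List (Fin n) → ℍ[ℝ]
  | i, r :: I, c :: J => A i c * star (A r c) * zigzag A j r I J
  | i, _, _ => A i j

theorem zigzag_append (A : Matrix (Fin n) (Fin n) ℍ[ℝ]) (j r c : Fin n) :
    ∀ (I J : List (Fin n)) (i : Fin n), I.length = J.length →
      zigzag A j i (I ++ [r]) (J ++ [c]) = zigzag A c i I J * star (A r c) * A r j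
  | [], [], i, _ => by simp [zigzag]
  | p :: I, q :: J, i, h => by
    simp only [List.cons_append, zigzag]
    rw [zigzag_append A j r c I J p (by simpa using h)]
    simp only [mul_assoc]

/-- Stripping the two outer factors from a monomial leaves the conjugate of a shorter monomial,
read backwards. -/
theorem zigzag_reverse (A : Matrix (Fin n) (Fin n) ℍ[ℝ]) (i q : Fin n) :
    ∀ (I J : List (Fin n)) (p j : Fin n), I.length = J.length →
      zigzag A j i (I.reverse ++ [p]) (q :: J.reverse)
        = A i q * star (zigzag A q p I J) * A p j
  | [], [], p, j, _ => by simp [zigzag]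
  | r :: I, c :: J, p, j, h => by
    have h' : I.length = J.length := by simpa using h
    rw [List.reverse_cons, List.reverse_cons, ← List.cons_append,
      zigzag_append A j p c _ _ i (by simp [h']), zigzag_reverse A i q I J r c h']
    simp only [zigzag, star_mul, star_star, mul_assoc]

/-- The indexed product in `listMono` agrees with the recursive monomial. The defaults `d`, `d'` of
`getD` are never reached. -/
theorem prod_eq_zigzag (A : Matrix (Fin n) (Fin n) ℍ[ℝ]) (j d d' : Fin n) :
    ∀ (I J : List (Fin n)) (i : Fin n), I.length = J.length →
      ((List.range I.length).map (fun t => A ((i :: I).getD t d) (J.getD t d') *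
        star (A (I.getD t d) (J.getD t d')))).prod * A ((i :: I).getD I.length d) j
        = zigzag A j i I J
  | [], [], i, _ => by simp [zigzag]
  | p :: I, q :: J, i, h => by
    have := prod_eq_zigzag A j d d' I J p (by simpa using h)
    rw [zigzag, ← this, List.length_cons, List.range_succ_eq_map, List.map_cons, List.prod_cons,
      List.map_map]
    simp only [List.getD_cons_zero, List.getD_cons_succ, Function.comp_def, mul_assoc]

theorem listMono_cons (A : Matrix (Fin n) (Fin n) ℍ[ℝ]) (i j : Fin n) (I J : List (Fin n))
    (h : I.length = J.length) : listMono A i j (i :: I) (j :: J) = zigzag A j i I J := by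
  rw [← prod_eq_zigzag A j i j I J i h, listMono]
  simp only [List.length_cons, Nat.add_sub_cancel, List.getD_cons_zero, List.getD_cons_succ]

/-- The sum of the alternating monomials from `i` to `j` over all orderings of the intermediate rows
`S` and columns `T`; this is `π_{ij}` of the submatrix on `S ∪ {i}` and `T ∪ {j}`. -/
noncomputable def zigzagSum (A : Matrix (Fin n) (Fin n) ℍ[ℝ]) (i j : Fin n)
    (S T : Finset (Fin n)) : ℍ[ℝ] :=
  ∑ I ∈ ords S, ∑ J ∈ ords T, zigzag A j i I J

theorem dperm_eq_zigzagSum (A : Matrix (Fin n) (Fin n) ℍ[ℝ]) {i j : Fin n}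
    {S T : Finset (Fin n)} (hi : i ∈ S) (hj : j ∈ T) (h : S.card = T.card) :
    dperm A i j S T = zigzagSum A i j (S.erase i) (T.erase j) := by
  rw [dperm, sum_filter_head hi, zigzagSum]
  refine Finset.sum_congr rfl fun I hI => ?_
  rw [sum_filter_head hj]
  refine Finset.sum_congr rfl fun J hJ => listMono_cons A i j I J ?_
  rw [length_of_mem_ords hI, length_of_mem_ords hJ, Finset.card_erase_of_mem hi,
    Finset.card_erase_of_mem hj, h]

/-- Recursion for the double permanent, grouping by the first intermediate column `q` and the last
intermediate row `p`. -/
theorem zigzagSum_rec (A : Matrix (Fin n) (Fin n) ℍ[ℝ]) (i j : Fin n)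
    {S T : Finset (Fin n)} (h : S.card = T.card) :
    zigzagSum A i j S T = (if S = ∅ then A i j else 0) + ∑ p ∈ S, ∑ q ∈ T,
      A i q * star (zigzagSum A p q (S.erase p) (T.erase q)) * A p j := by
  rcases S.eq_empty_or_nonempty with rfl | hS
  · have hT : T = ∅ := by simpa using h.symm
    subst hT
    simp [zigzagSum, ords_empty, zigzag]
  have hT : T.Nonempty := by rw [← Finset.card_pos, ← h]; exact hS.card_pos
  rw [if_neg hS.ne_empty, zero_add, zigzagSum, ← sum_ords_reverse, sum_ords_cons hS]
  refine Finset.sum_congr rfl fun p hp => ?_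
  rw [Finset.sum_congr rfl fun I _ => sum_ords_cons hT _, Finset.sum_comm]
  refine Finset.sum_congr rfl fun q hq => ?_
  rw [zigzagSum, star_sum, Finset.mul_sum, Finset.sum_mul]
  refine Finset.sum_congr rfl fun I hI => ?_
  rw [star_sum, Finset.mul_sum, Finset.sum_mul, ← sum_ords_reverse]
  refine Finset.sum_congr rfl fun J hJ => ?_
  rw [List.reverse_cons, zigzag_reverse]
  rw [length_of_mem_ords hI, length_of_mem_ords hJ, Finset.card_erase_of_mem hp,
    Finset.card_erase_of_mem hq, h]

theorem sum_powerset_sum (S : Finset (Fin n)) (f : Finset (Fin n) → Fin n → ℍ[ℝ]) :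
    ∑ S' ∈ S.powerset, ∑ p ∈ S', f S' p
      = ∑ p ∈ S, ∑ S' ∈ (S.erase p).powerset, f (insert p S') p := by
  rw [Finset.sum_sigma', Finset.sum_sigma']
  refine Finset.sum_bij' (fun x _ => ⟨x.2, x.1.erase x.2⟩) (fun x _ => ⟨insert x.1 x.2, x.1⟩)
    ?_ ?_ ?_ ?_ ?_
  · rintro ⟨S', p⟩ h
    simp only [Finset.mem_sigma, Finset.mem_powerset] at h ⊢
    exact ⟨h.1 h.2, Finset.erase_subset_erase p h.1⟩
  · rintro ⟨p, S'⟩ h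
    simp only [Finset.mem_sigma, Finset.mem_powerset] at h ⊢
    exact ⟨Finset.insert_subset h.1 (h.2.trans (Finset.erase_subset _ _)),
      Finset.mem_insert_self _ _⟩
  · rintro ⟨S', p⟩ h
    simp only [Finset.mem_sigma] at h
    simp [Finset.insert_erase h.2]
  · rintro ⟨p, S'⟩ h
    simp only [Finset.mem_sigma, Finset.mem_powerset] at h
    have : p ∉ S' := fun hp => Finset.notMem_erase p S (h.2 hp)
    simp [Finset.erase_insert this]
  · rintro ⟨S', p⟩ h
    simp only [Finset.mem_sigma] at h
    simp [Finset.insert_erase h.2]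

/-- The sum `P` with `i` and `j` removed from the index sets: an alternating sum over square
submatrices of the `S × T` block, weighted by an arbitrary function `N` of the complementary
block. -/
noncomputable def altSum (N : Finset (Fin n) → Finset (Fin n) → ℝ)
    (A : Matrix (Fin n) (Fin n) ℍ[ℝ]) (i j : Fin n) (S T : Finset (Fin n)) : ℍ[ℝ] :=
  ∑ S' ∈ S.powerset, ∑ T' ∈ T.powerset, if S'.card = T'.card then
    (((-1) ^ S'.card * N (S \ S') (T \ T') : ℝ) : ℍ[ℝ]) * zigzagSum A i j S' T' else 0

/-- The recursion for `P`, which has the same shape as the recursion `qdet_subMat` for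
quasideterminants. -/
theorem altSum_rec (N : Finset (Fin n) → Finset (Fin n) → ℝ)
    (A : Matrix (Fin n) (Fin n) ℍ[ℝ]) (i j : Fin n) (S T : Finset (Fin n)) :
    altSum N A i j S T = (N S T : ℍ[ℝ]) * A i j - ∑ p ∈ S, ∑ q ∈ T,
      A i q * star (altSum N A p q (S.erase p) (T.erase q)) * A p j := by
  let c : Finset (Fin n) → Finset (Fin n) → ℝ := fun S' T' =>
    if S'.card = T'.card then (-1) ^ S'.card * N (S \ S') (T \ T') else 0
  have hterm : ∀ S' T' : Finset (Fin n), (if S'.card = T'.card then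
      (((-1) ^ S'.card * N (S \ S') (T \ T') : ℝ) : ℍ[ℝ]) * zigzagSum A i j S' T' else 0)
      = (if S' = ∅ then (if T' = ∅ then (N S T : ℍ[ℝ]) * A i j else 0) else 0)
        + ∑ p ∈ S', ∑ q ∈ T', (c S' T' : ℍ[ℝ]) *
          (A i q * star (zigzagSum A p q (S'.erase p) (T'.erase q)) * A p j) := by
    intro S' T'
    by_cases h : S'.card = T'.card
    · have hc : c S' T' = (-1) ^ S'.card * N (S \ S') (T \ T') := if_pos h
      rw [if_pos h, zigzagSum_rec A i j h, mul_add, ← hc]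
      simp_rw [Finset.mul_sum]
      congr 1
      by_cases hS : S' = ∅
      · have hT : T' = ∅ := by simpa [hS] using h.symm
        simp [hS, hT, c]
      · simp [hS]
    · have hc : c S' T' = 0 := if_neg h
      have : ¬ (S' = ∅ ∧ T' = ∅) := by rintro ⟨rfl, rfl⟩; exact h rfl
      rw [if_neg h, hc, ← ite_and, if_neg this]
      simp
  rw [altSum]
  simp_rw [hterm, Finset.sum_add_distrib]
  rw [sub_eq_add_neg]
  congr 1
  · simp [Finset.sum_ite_irrel]
  simp_rw [Finset.sum_comm (s := T.powerset)]
  rw [sum_powerset_sum S (fun S' p => ∑ T' ∈ T.powerset, ∑ q ∈ T', (c S' T' : ℍ[ℝ]) *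
    (A i q * star (zigzagSum A p q (S'.erase p) (T'.erase q)) * A p j)),
    ← Finset.sum_neg_distrib]
  refine Finset.sum_congr rfl fun p hp => ?_
  simp_rw [sum_powerset_sum T]
  rw [Finset.sum_comm, ← Finset.sum_neg_distrib]
  refine Finset.sum_congr rfl fun q hq => ?_
  rw [altSum, star_sum, Finset.mul_sum, Finset.sum_mul, ← Finset.sum_neg_distrib]
  refine Finset.sum_congr rfl fun S' hS' => ?_
  rw [star_sum, Finset.mul_sum, Finset.sum_mul, ← Finset.sum_neg_distrib]
  refine Finset.sum_congr rfl fun T' hT' => ?_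
  have hpS : p ∉ S' := fun h => Finset.notMem_erase p S (Finset.mem_powerset.1 hS' h)
  have hqT : q ∉ T' := fun h => Finset.notMem_erase q T (Finset.mem_powerset.1 hT' h)
  have eS : S \ insert p S' = S.erase p \ S' := by
    rw [Finset.sdiff_insert, Finset.erase_sdiff_comm]
  have eT : T \ insert q T' = T.erase q \ T' := by
    rw [Finset.sdiff_insert, Finset.erase_sdiff_comm]
  have hc : c (insert p S') (insert q T') = -(if S'.card = T'.card then
      (-1) ^ S'.card * N (S.erase p \ S') (T.erase q \ T') else 0) := by
    simp only [c, Finset.card_insert_of_notMem hpS, Finset.card_insert_of_notMem hqT, eS, eT,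
      add_left_inj]
    split_ifs <;> ring
  rw [hc, Finset.erase_insert hpS, Finset.erase_insert hqT]
  split_ifs
  · rw [star_mul, Quaternion.star_coe, Quaternion.coe_neg, neg_mul, neg_inj,
      ← Quaternion.coe_commutes, ← mul_assoc, ← mul_assoc, ← mul_assoc, ← Quaternion.coe_commutes]
  · simp

end Combinatorics

/-! ### Quasideterminants of submatrices of a generic matrix -/

section GenericMatrix

variable {n : ℕ}

theorem Generic.hasTwoSidedInv {A : Matrix (Fin n) (Fin n) ℍ[ℝ]} (hA : Generic A)
    {K L : Type*} [Fintype K] [Fintype L] [DecidableEq K] [DecidableEq L]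
    {e : K → Fin n} {f : L → Fin n} (he : Function.Injective e) (hf : Function.Injective f)
    (h : Fintype.card K = Fintype.card L) : HasTwoSidedInv (A.submatrix e f) := by
  have key := hA (Finset.univ.image e) (Finset.univ.image f) (by
    rw [Finset.card_image_of_injective _ he, Finset.card_image_of_injective _ hf,
      Finset.card_univ, Finset.card_univ, h])
  let e' : K ≃ {p // p ∈ Finset.univ.image e} :=
    (Equiv.ofInjective e he).trans (Equiv.subtypeEquivRight (by simp))
  let f' : L ≃ {p // p ∈ Finset.univ.image f} :=
    (Equiv.ofInjective f hf).trans (Equiv.subtypeEquivRight (by simp))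
  exact key.submatrix e' f'

theorem prod_of_telescope (s : ℕ → ℝ) : ∀ (m : ℕ) (y : Fin m → ℝ),
    (∀ k : Fin m, s k = y k * s (k + 1)) → s 0 = (∏ k, y k) * s m
  | 0, _, _ => by simp
  | m + 1, y, h => by
    rw [prod_of_telescope s m (fun k => y k.castSucc) fun k => h k.castSucc,
      Fin.prod_univ_castSucc, mul_assoc]
    congr 1
    exact h (Fin.last m)

/-- The norm `ν` is the Study determinant: split off the quasideterminants `y_k` one by one with the
Schur complement formula. -/
theorem nuMat_eq_sdet {A : Matrix (Fin n) (Fin n) ℍ[ℝ]} (hA : Generic A) {m : ℕ}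
    {e f : Fin m → Fin n} (he : Function.Injective e) (hf : Function.Injective f) :
    nuMat (A.submatrix e f) = sdet (A.submatrix e f) := by
  set C := A.submatrix e f with hC
  -- `s k` is the Study determinant of the trailing principal block from index `k` on.
  let s : ℕ → ℝ := fun k => sdet (C.submatrix (Subtype.val : {p : Fin m // k ≤ p.val} → Fin m)
    (Subtype.val : {p : Fin m // k ≤ p.val} → Fin m))
  have hs0 : s 0 = sdet C :=
    sdet_submatrix C (Equiv.subtypeUnivEquiv fun p => Nat.zero_le p.val)
      (Equiv.subtypeUnivEquiv fun p => Nat.zero_le p.val)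
  have hsm : s m = 1 := by
    have : IsEmpty {p : Fin m // m ≤ p.val} := ⟨fun p => absurd p.1.2 (not_lt.2 p.2)⟩
    exact sdet_empty _
  have := prod_of_telescope s m (fun k => Quaternion.normSq (ykQdet C k)) fun k => by
    let E : {p : Fin m // k.val ≤ p.val} ≃ {p : Fin m // k ≤ p} :=
      Equiv.subtypeEquivRight fun p => Iff.rfl
    let k' : {p : Fin m // k ≤ p} := ⟨k, le_refl k⟩
    let E' : {p : Fin m // k.val + 1 ≤ p.val} ≃ {p : {p : Fin m // k ≤ p} // p ≠ k'} :=
      { toFun := fun p => ⟨⟨p.1, Fin.le_def.2 (by have := p.2; omega)⟩, fun h => by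
          have h' : p.1 = k := congrArg Subtype.val h
          have := p.2
          rw [h'] at this
          omega⟩
        invFun := fun p => ⟨p.1.1, by
          have h₁ := p.1.2
          have h₂ : p.1.1 ≠ k := fun h => p.2 (Subtype.ext h)
          exact lt_of_le_of_ne h₁ (Ne.symm h₂)⟩
        left_inv := fun p => rfl
        right_inv := fun p => rfl }
    have h₁ : s k = sdet (C.submatrix (Subtype.val : {p : Fin m // k ≤ p} → Fin m)
        (Subtype.val : {q : Fin m // k ≤ q} → Fin m)) :=
      sdet_submatrix (C.submatrix (Subtype.val : {p : Fin m // k ≤ p} → Fin m)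
        (Subtype.val : {q : Fin m // k ≤ q} → Fin m)) E E
    have h₂ : s (k + 1) = sdet (delSub (C.submatrix (Subtype.val : {p : Fin m // k ≤ p} → Fin m)
        (Subtype.val : {q : Fin m // k ≤ q} → Fin m)) k' k') :=
      sdet_submatrix (delSub (C.submatrix (Subtype.val : {p : Fin m // k ≤ p} → Fin m)
        (Subtype.val : {q : Fin m // k ≤ q} → Fin m)) k' k') E' E'
    rw [h₁, h₂]
    refine sdet_eq_normSq_qdet_mul _ k' k' (Equiv.refl _) ?_
    exact hA.hasTwoSidedInv
      (he.comp (Subtype.val_injective.comp Subtype.val_injective))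
      (hf.comp (Subtype.val_injective.comp Subtype.val_injective)) rfl
  rw [← hs0, this, hsm, mul_one, nuMat]

/-- The submatrix of `A` on rows `S` and columns `T`. -/
abbrev subMat (A : Matrix (Fin n) (Fin n) ℍ[ℝ]) (S T : Finset (Fin n)) :
    Matrix {p // p ∈ S} {q // q ∈ T} ℍ[ℝ] :=
  A.submatrix Subtype.val Subtype.val

theorem nuOfSub_eq_sdet {A : Matrix (Fin n) (Fin n) ℍ[ℝ]} (hA : Generic A)
    {S T : Finset (Fin n)} (h : S.card = T.card) : nuOfSub A S T = sdet (subMat A S T) := by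
  rw [nuOfSub, dif_pos h]
  refine (nuMat_eq_sdet hA
    (e := fun p => (S.orderIsoOfFin rfl p : Fin n))
    (f := fun q => (T.orderIsoOfFin h.symm q : Fin n))
    (Subtype.val_injective.comp (S.orderIsoOfFin rfl).injective)
    (Subtype.val_injective.comp (T.orderIsoOfFin h.symm).injective)).trans ?_
  exact sdet_submatrix (subMat A S T) (S.orderIsoOfFin rfl).toEquiv
    (T.orderIsoOfFin h.symm).toEquiv

def eraseEquiv (S : Finset (Fin n)) (i : {p // p ∈ S}) :
    {p : {p // p ∈ S} // p ≠ i} ≃ {p // p ∈ S.erase i} where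
  toFun p := ⟨p.1.1, Finset.mem_erase.2 ⟨fun h => p.2 (Subtype.ext h), p.1.2⟩⟩
  invFun p := ⟨⟨p.1, (Finset.mem_erase.1 p.2).2⟩,
    fun h => (Finset.mem_erase.1 p.2).1 (congrArg Subtype.val h)⟩
  left_inv _ := rfl
  right_inv _ := rfl

theorem Generic.qdetDefined {A : Matrix (Fin n) (Fin n) ℍ[ℝ]} (hA : Generic A)
    {S T : Finset (Fin n)} (h : S.card = T.card) (i : {p // p ∈ S}) (j : {q // q ∈ T}) :
    QdetDefined (subMat A S T) i j :=
  hA.hasTwoSidedInv (Subtype.val_injective.comp Subtype.val_injective)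
    (Subtype.val_injective.comp Subtype.val_injective) (by
      rw [Fintype.card_congr (eraseEquiv S i), Fintype.card_congr (eraseEquiv T j),
        Fintype.card_coe, Fintype.card_coe, Finset.card_erase_of_mem i.2,
        Finset.card_erase_of_mem j.2, h])

theorem sdet_subMat {A : Matrix (Fin n) (Fin n) ℍ[ℝ]} (hA : Generic A)
    {S T : Finset (Fin n)} (h : S.card = T.card) (i : {p // p ∈ S}) (j : {q // q ∈ T}) :
    sdet (subMat A S T) = Quaternion.normSq (qdet (subMat A S T) i j)
      * sdet (subMat A (S.erase i) (T.erase j)) := by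
  have g : {p : {p // p ∈ S} // p ≠ i} ≃ {q : {q // q ∈ T} // q ≠ j} :=
    (eraseEquiv S i).trans ((Finset.equivOfCardEq (by
      rw [Finset.card_erase_of_mem i.2, Finset.card_erase_of_mem j.2, h])).trans
      (eraseEquiv T j).symm)
  rw [sdet_eq_normSq_qdet_mul _ i j g (hA.qdetDefined h i j)]
  congr 1
  exact sdet_submatrix (subMat A (S.erase i) (T.erase j)) (eraseEquiv S i) (eraseEquiv T j)

/-- Quasideterminants by recursion: the inverse of the minor `A^{ij}` has as entries the inverses of
the quasideterminants of that minor. -/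
theorem qdet_subMat {A : Matrix (Fin n) (Fin n) ℍ[ℝ]} (hA : Generic A)
    {S T : Finset (Fin n)} (h : S.card = T.card) (i : {p // p ∈ S}) (j : {q // q ∈ T}) :
    qdet (subMat A S T) i j = A i j - ∑ p : {p // p ∈ S.erase i}, ∑ q : {q // q ∈ T.erase j},
      A i q * (qdet (subMat A (S.erase i) (T.erase j)) p q)⁻¹ * A p j := by
  have h' : (S.erase i.1).card = (T.erase j.1).card := by
    rw [Finset.card_erase_of_mem i.2, Finset.card_erase_of_mem j.2, h]
  obtain ⟨B, h₁, h₂⟩ := hA (S.erase i.1) (T.erase j.1) h'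
  have hdel : delSub (subMat A S T) i j
      = (subMat A (S.erase i) (T.erase j)).submatrix (eraseEquiv S i) (eraseEquiv T j) := rfl
  rw [qdet_eq (subMat A S T) i j (B.submatrix (eraseEquiv T j) (eraseEquiv S i))
    (by rw [hdel, Matrix.submatrix_mul_equiv, h₁, Matrix.submatrix_one_equiv])
    (by rw [hdel, Matrix.submatrix_mul_equiv, h₂, Matrix.submatrix_one_equiv])]
  congr 1
  refine Fintype.sum_equiv (eraseEquiv S i) _ _ fun p =>
    Fintype.sum_equiv (eraseEquiv T j) _ _ fun q => ?_
  rw [← eq_inv_of_mul_eq_one_left (inv_mul_qdet (subMat A (S.erase i) (T.erase j))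
    (eraseEquiv S i p) (eraseEquiv T j q) B h₂ (hA.qdetDefined h' _ _))]
  rfl

theorem normSq_mul_inv (q : ℍ[ℝ]) : ((Quaternion.normSq q : ℝ) : ℍ[ℝ]) * q⁻¹ = star q := by
  by_cases hq : q = 0
  · simp [hq]
  · rw [← Quaternion.star_mul_self, mul_assoc, mul_inv_cancel₀ hq, mul_one]

/-- The identity `ν(A^{ij}) |A|_{ij} = P`, for all square submatrices of `A`. -/
theorem sdet_mul_qdet_eq_altSum {A : Matrix (Fin n) (Fin n) ℍ[ℝ]} (hA : Generic A) :
    ∀ (k : ℕ) (S T : Finset (Fin n)), S.card = k → T.card = k →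
      ∀ (i : {p // p ∈ S}) (j : {q // q ∈ T}),
      ((sdet (subMat A (S.erase i) (T.erase j)) : ℝ) : ℍ[ℝ]) * qdet (subMat A S T) i j
        = altSum (fun S T => sdet (subMat A S T)) A i j (S.erase i) (T.erase j)
  | 0, S, T, hS, hT, i, j => by
    exact absurd (Finset.card_pos.2 ⟨i.1, i.2⟩) (by omega)
  | k + 1, S, T, hS, hT, i, j => by
    have hS' : (S.erase i.1).card = k := by rw [Finset.card_erase_of_mem i.2, hS]; rfl
    have hT' : (T.erase j.1).card = k := by rw [Finset.card_erase_of_mem j.2, hT]; rfl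
    rw [qdet_subMat hA (hS.trans hT.symm), altSum_rec, mul_sub]
    congr 1
    rw [← Finset.sum_coe_sort (S.erase i.1), Finset.mul_sum]
    refine Finset.sum_congr rfl fun p _ => ?_
    rw [← Finset.sum_coe_sort (T.erase j.1), Finset.mul_sum]
    refine Finset.sum_congr rfl fun q _ => ?_
    rw [← sdet_mul_qdet_eq_altSum hA k _ _ hS' hT' p q, star_mul, Quaternion.star_coe,
      ← normSq_mul_inv, sdet_subMat hA (hS'.trans hT'.symm) p q, Quaternion.coe_mul]
    generalize (qdet (subMat A (S.erase i.1) (T.erase j.1)) p q)⁻¹ = x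
    generalize Quaternion.normSq (qdet (subMat A (S.erase i.1) (T.erase j.1)) p q) = y
    generalize sdet (subMat A ((S.erase i.1).erase p.1) ((T.erase j.1).erase q.1)) = z
    -- Only the real scalars `y`, `z` have to be moved, so comparing components is enough.
    ext <;> simp <;> ring

end GenericMatrix

theorem sum_eq_altSum {n : ℕ} {A : Matrix (Fin n) (Fin n) ℍ[ℝ]} (hA : Generic A) (i j : Fin n) :
    (∑ S : Finset (Fin n), ∑ T : Finset (Fin n),
        if i ∈ S ∧ j ∈ T ∧ S.card = T.card then
          (-1 : ℍ[ℝ]) ^ (S.card - 1) * (↑(nuOfSub A Sᶜ Tᶜ) : ℍ[ℝ]) * dperm A i j S T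
        else 0) = altSum (fun S T => sdet (subMat A S T)) A i j
          (Finset.univ.erase i) (Finset.univ.erase j) := by
  have key : ∀ (i : Fin n) (f : Finset (Fin n) → ℍ[ℝ]), (∀ S, i ∉ S → f S = 0) →
      ∑ S : Finset (Fin n), f S = ∑ S ∈ (Finset.univ.erase i).powerset, f (insert i S) := by
    intro i f hf
    symm
    refine Finset.sum_of_injOn (insert i) ?_ (fun _ _ => Finset.mem_coe.2 (Finset.mem_univ _)) ?_
      fun _ _ => rfl
    · intro S hS S' hS' h
      have h₁ : i ∉ S := fun h => Finset.notMem_erase i _ (Finset.mem_powerset.1 hS h)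
      have h₂ : i ∉ S' := fun h => Finset.notMem_erase i _ (Finset.mem_powerset.1 hS' h)
      rw [← Finset.erase_insert h₁, ← Finset.erase_insert h₂, h]
    · intro S _ hS
      refine hf S fun hi => hS ⟨S.erase i, ?_, Finset.insert_erase hi⟩
      exact Finset.mem_coe.2 (Finset.mem_powerset.2
        (Finset.erase_subset_erase i (Finset.subset_univ S)))
  rw [key i _ (fun S hS => Finset.sum_eq_zero fun T _ => if_neg fun h => hS h.1), altSum]
  refine Finset.sum_congr rfl fun S hS => ?_
  rw [key j _ (fun T hT => if_neg fun h => hT h.2.1)]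
  refine Finset.sum_congr rfl fun T hT => ?_
  have hiS : i ∉ S := fun h => Finset.notMem_erase i _ (Finset.mem_powerset.1 hS h)
  have hjT : j ∉ T := fun h => Finset.notMem_erase j _ (Finset.mem_powerset.1 hT h)
  have hcard : (insert i S).card = (insert j T).card ↔ S.card = T.card := by
    rw [Finset.card_insert_of_notMem hiS, Finset.card_insert_of_notMem hjT, add_left_inj]
  have hi := Finset.mem_insert_self i S
  have hj := Finset.mem_insert_self j T
  by_cases h : S.card = T.card
  · rw [if_pos ⟨hi, hj, hcard.2 h⟩, if_pos h, dperm_eq_zigzagSum A hi hj (hcard.2 h),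
      Finset.erase_insert hiS, Finset.erase_insert hjT, nuOfSub_eq_sdet hA (by
        rw [Finset.card_compl, Finset.card_compl, hcard.2 h]), Finset.card_insert_of_notMem hiS]
    have eS : (insert i S)ᶜ = Finset.univ.erase i \ S := by
      rw [Finset.compl_eq_univ_sdiff, Finset.sdiff_insert, Finset.erase_sdiff_comm]
    have eT : (insert j T)ᶜ = Finset.univ.erase j \ T := by
      rw [Finset.compl_eq_univ_sdiff, Finset.sdiff_insert, Finset.erase_sdiff_comm]
    rw [eS, eT]
    push_cast
    simp
  · rw [if_neg fun h' => h (hcard.1 h'.2.2), if_neg h]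

/-- With `P = Σ_B (−1)^{K(B)−1} ν(B^c) π_{ij}(B)` (the sum over all square submatrices `B`
of `A` containing the entry `a_{ij}`), one has `ν(A) ν(A^{ij}) = P P̄`. -/
theorem nu_mul_nu_eq_P_mul_conj_P {n : ℕ}
    (A : Matrix (Fin n) (Fin n) ℍ[ℝ]) (hA : Generic A) (i j : Fin n)
    (P : ℍ[ℝ])
    (hP : P = ∑ S : Finset (Fin n), ∑ T : Finset (Fin n),
        if i ∈ S ∧ j ∈ T ∧ S.card = T.card then
          (-1 : ℍ[ℝ]) ^ (S.card - 1) * (↑(nuOfSub A Sᶜ Tᶜ) : ℍ[ℝ]) * dperm A i j S T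
        else 0) :
    (↑(nuMat A) : ℍ[ℝ]) * (↑(nuOfSub A (Finset.univ.erase i) (Finset.univ.erase j)) : ℍ[ℝ]) =
      P * star P := by
  have hcard : (Finset.univ.erase i).card = (Finset.univ.erase j).card := by
    rw [Finset.card_erase_of_mem (Finset.mem_univ i), Finset.card_erase_of_mem (Finset.mem_univ j)]
  let i' : {p // p ∈ (Finset.univ : Finset (Fin n))} := ⟨i, Finset.mem_univ i⟩
  let j' : {p // p ∈ (Finset.univ : Finset (Fin n))} := ⟨j, Finset.mem_univ j⟩
  have hnu : nuMat A = sdet (subMat A Finset.univ Finset.univ) :=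
    (nuMat_eq_sdet hA Function.injective_id Function.injective_id).trans
      (sdet_submatrix A (Equiv.subtypeUnivEquiv Finset.mem_univ)
        (Equiv.subtypeUnivEquiv Finset.mem_univ)).symm
  have hPq := sdet_mul_qdet_eq_altSum hA _ Finset.univ Finset.univ rfl rfl i' j'
  rw [hP, sum_eq_altSum hA, ← hPq, Quaternion.self_mul_star, map_mul, Quaternion.normSq_coe,
    nuOfSub_eq_sdet hA hcard, hnu, sdet_subMat hA rfl i' j', ← Quaternion.coe_mul]
  congr 1
  ring
end

section
/- Let A = (a_{pq}) be a generic n×n matrix over the quaternions ℍ (n ≥ 2) and for indices i, j set Q_{ij}(A) = |A|_{ij} ν(A^{ij}). Then Q_{ij}(A) = ν(A^{ij}) a_{ij} − Σ_{p≠i, q≠j} a_{iq} · conj(Q_{pq}(A^{ij})) · a_{pj}, where the sum is over all p ∈ {1,…,n}∖{i} and q ∈ {1,…,n}∖{j}, Q_{pq}(A^{ij}) is formed inside the submatrix A^{ij} at the position labeled by original row index p and original column index q, and conj denotes quaternionic conjugation. -/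
/-!
Write `B = A^{ij}`. Every entry of `B⁻¹` is the inverse of a quasideterminant,
`(B⁻¹)_{qp} |B|_{pq} = 1` (`inv_mul_qdet`), so the definition of `|A|_{ij}` gives the claim after
multiplication by the central scalar `ν(B)`, once `ν(B) = ν(|B|_{pq}) ν(B^{pq})` is known for every
position `(p,q)`: then `(B⁻¹)_{qp} ν(B) = (B⁻¹)_{qp} |B|_{pq} conj(|B|_{pq}) ν(B^{pq})
= conj(Q_{pq}(B))`.

The factorization of `ν` follows by comparison with an ordinary determinant. Embedding `ℍ` in
`M₂(ℂ)` turns a quaternionic matrix into a complex one; let `bigD` be the modulus of its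
determinant, which is insensitive to reorderings of rows and columns. The Schur complement formula
yields `bigD M = ν(|M|_{pq}) bigD (M^{pq})` for every `(p,q)` (`bigD_schur`). Applied along the
diagonal this shows `ν = bigD` (`nuMat_eq_bigD`, `nuOfSub_eq_bigD`), so `ν` obeys the same formula.
-/

open Matrix

variable {R : Type*} [Ring R]

open scoped Quaternion

/-! ### The complex determinant of a quaternionic matrix -/

/-- The standard embedding `ℍ → M₂(ℂ)`, whose determinant is the quaternion norm. -/
noncomputable def toC (h : ℍ[ℝ]) : Matrix (Fin 2) (Fin 2) ℂ :=
  !![⟨h.re, h.imI⟩, ⟨h.imJ, h.imK⟩; ⟨-h.imJ, h.imK⟩, ⟨h.re, -h.imI⟩]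

lemma toC_mul (a b : ℍ[ℝ]) : toC (a * b) = toC a * toC b := by
  ext i j
  fin_cases i <;> fin_cases j <;>
    simp [toC, Matrix.mul_apply, Fin.sum_univ_two, Complex.ext_iff] <;> constructor <;> ring

lemma toC_add (a b : ℍ[ℝ]) : toC (a + b) = toC a + toC b := by
  ext i j
  fin_cases i <;> fin_cases j <;> simp [toC, Complex.ext_iff] <;> ring

lemma toC_zero : toC 0 = 0 := by
  ext i j
  fin_cases i <;> fin_cases j <;> simp [toC, Complex.ext_iff]

lemma toC_one : toC 1 = 1 := by
  ext i j
  fin_cases i <;> fin_cases j <;> simp [toC, Complex.ext_iff]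

lemma norm_det_toC (h : ℍ[ℝ]) : ‖(toC h).det‖ = Quaternion.normSq h := by
  have : (toC h).det = ((Quaternion.normSq h : ℝ) : ℂ) := by
    rw [Matrix.det_fin_two, Quaternion.normSq_def']
    simp [toC, Complex.ext_iff, pow_two]
    constructor <;> ring
  rw [this, Complex.norm_real, Real.norm_of_nonneg Quaternion.normSq_nonneg]

/-- `toC` as an additive homomorphism. -/
noncomputable def toCHom : ℍ[ℝ] →+ Matrix (Fin 2) (Fin 2) ℂ where
  toFun := toC
  map_zero' := toC_zero
  map_add' := toC_add

/-- The complex matrix obtained by replacing every quaternion entry by its `2×2` block. -/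
noncomputable def blk {I J : Type*} (M : Matrix I J ℍ[ℝ]) :
    Matrix (I × Fin 2) (J × Fin 2) ℂ :=
  Matrix.of fun x y => toC (M x.1 y.1) x.2 y.2

lemma blk_mul {I J K : Type*} [Fintype J] (M : Matrix I J ℍ[ℝ]) (N : Matrix J K ℍ[ℝ]) : blk (M * N) = blk M * blk N := by
  ext x y
  have h : toC ((M * N) x.1 y.1) = ∑ j, toC (M x.1 j) * toC (N j y.1) := by
    rw [Matrix.mul_apply]
    change toCHom _ = _
    rw [map_sum]
    exact Finset.sum_congr rfl fun j _ => toC_mul _ _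
  rw [Matrix.mul_apply, Fintype.sum_prod_type]
  simp only [blk, Matrix.of_apply]
  rw [h, Matrix.sum_apply]
  simp only [Matrix.mul_apply]

lemma blk_one {I : Type*} [DecidableEq I] : blk (1 : Matrix I I ℍ[ℝ]) = 1 := by
  ext ⟨a, s⟩ ⟨b, t⟩
  by_cases h : a = b
  · subst h
    simp [blk, toC_one, Matrix.one_apply]
  · simp [blk, toC_zero, Matrix.one_apply, h]

lemma blk_sub {I J : Type*} (M N : Matrix I J ℍ[ℝ]) : blk (M - N) = blk M - blk N := by
  ext x y
  have : toC (M x.1 y.1 - N x.1 y.1) = toC (M x.1 y.1) - toC (N x.1 y.1) :=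
    map_sub toCHom _ _
  simp [blk, this]

/-- The norm of a complex determinant does not depend on how rows are matched with columns. -/
lemma norm_det_submatrix_eq {X Y Z W : Type*} [Fintype Z] [DecidableEq Z] [Fintype W]
    [DecidableEq W] (N : Matrix X Y ℂ) (f : Z ≃ X) (g : Z ≃ Y) (f' : W ≃ X) (g' : W ≃ Y) :
    ‖(N.submatrix f g).det‖ = ‖(N.submatrix f' g').det‖ := by
  have h1 : N.submatrix f g = ((N.submatrix f' g').submatrix id
      ((f'.trans f.symm).trans (g.trans g'.symm))).submatrix (f.trans f'.symm)
        (f.trans f'.symm) := by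
    ext a b
    simp
  rw [h1, Matrix.det_submatrix_equiv_self, Matrix.det_permute', norm_mul]
  have : ∀ u : ℤˣ, ‖(((u : ℤˣ) : ℤ) : ℂ)‖ = 1 := by
    intro u
    rcases Int.units_eq_one_or u with h | h <;> simp [h]
  rw [this, one_mul]

open Classical in
/-- The norm of the complex determinant of a quaternionic matrix with equally many rows and
columns (`0` if the numbers differ); rows and columns may carry different labels. -/
noncomputable def bigD {I J : Type*} [Fintype I] [DecidableEq I] (M : Matrix I J ℍ[ℝ]) : ℝ :=
  if h : Nonempty (I ≃ J) then
    ‖((blk M).submatrix (Equiv.refl _) (h.some.prodCongr (Equiv.refl (Fin 2)))).det‖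
  else 0

lemma bigD_eq {I J : Type*} [Fintype I] [DecidableEq I] (M : Matrix I J ℍ[ℝ])
    (h : Nonempty (I ≃ J)) {Z : Type*} [Fintype Z]
    [DecidableEq Z] (f : Z ≃ I × Fin 2) (g : Z ≃ J × Fin 2) :
    bigD M = ‖((blk M).submatrix f g).det‖ := by
  rw [bigD, dif_pos h]
  exact norm_det_submatrix_eq _ _ _ _ _

lemma bigD_submatrix {I J I' J' : Type*} [Fintype I] [DecidableEq I] [Fintype I']
    [DecidableEq I'] (M : Matrix I J ℍ[ℝ]) (h : Nonempty (I ≃ J)) (f : I' ≃ I) (g : J' ≃ J) :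
    bigD (M.submatrix f g) = bigD M := by
  obtain ⟨e⟩ := h
  rw [bigD_eq M ⟨e⟩ (f.prodCongr (Equiv.refl (Fin 2)))
      ((f.trans e).prodCongr (Equiv.refl (Fin 2))),
    bigD_eq (M.submatrix f g) ⟨(f.trans e).trans g.symm⟩ (Equiv.refl _)
      (((f.trans e).trans g.symm).prodCongr (Equiv.refl (Fin 2)))]
  congr 2
  ext x y
  simp [blk]

lemma card_ne_congr {I J : Type*} [Fintype I] [Fintype J] [DecidableEq I] [DecidableEq J]
    (h : Fintype.card I = Fintype.card J) (p : I) (q : J) :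
    Fintype.card {x : I // x ≠ p} = Fintype.card {x : J // x ≠ q} := by
  simp [Fintype.card_subtype_compl, h]

/-- Schur complement formula: expanding at any position `(p,q)` splits off the norm of the
quasideterminant. -/
lemma bigD_schur {I J : Type*} [Fintype I] [Fintype J] [DecidableEq I] [DecidableEq J]
    (M : Matrix I J ℍ[ℝ]) (hIJ : Nonempty (I ≃ J)) (p : I) (q : J)
    (hM : HasTwoSidedInv (delSub M p q)) :
    bigD M = Quaternion.normSq (qdet M p q) * bigD (delSub M p q) := by
  have hq : qdet M p q = M p q - ∑ p' : {p' : I // p' ≠ p}, ∑ q' : {q' : J // q' ≠ q},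
      M p q'.val * hM.choose q' p' * M p'.val q := by
    unfold qdet
    exact dif_pos hM
  obtain ⟨h1, h2⟩ := hM.choose_spec
  generalize hM.choose = E at hq h1 h2
  have he : Nonempty ({p' : I // p' ≠ p} ≃ {q' : J // q' ≠ q}) := by
    obtain ⟨e⟩ := hIJ
    exact ⟨Fintype.equivOfCardEq (card_ne_congr (Fintype.card_congr e) p q)⟩
  obtain ⟨e⟩ := he
  -- `f` and `g` move row `p` and column `q` to the last position.
  let f : {p' : I // p' ≠ p} ⊕ Unit ≃ I :=
    (Equiv.sumComm _ _).trans ((Equiv.sumCongr (Equiv.ofUnique Unit {x // x = p})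
      (Equiv.refl _)).trans (Equiv.sumCompl (fun x => x = p)))
  let g : {q' : J // q' ≠ q} ⊕ Unit ≃ J :=
    (Equiv.sumComm _ _).trans ((Equiv.sumCongr (Equiv.ofUnique Unit {x // x = q})
      (Equiv.refl _)).trans (Equiv.sumCompl (fun x => x = q)))
  let R : Matrix Unit {q' : J // q' ≠ q} ℍ[ℝ] := Matrix.of fun _ q' => M p q'
  let C : Matrix {p' : I // p' ≠ p} Unit ℍ[ℝ] := Matrix.of fun p' _ => M p' q
  let D : Matrix Unit Unit ℍ[ℝ] := Matrix.of fun _ _ => M p q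
  let s := e.prodCongr (Equiv.refl (Fin 2))
  have hD : D - R * E * C = Matrix.of fun _ _ => qdet M p q := by
    ext1 a b
    rw [Matrix.of_apply, hq, Matrix.sub_apply, Matrix.mul_apply]
    simp only [Matrix.mul_apply, Finset.sum_mul]
    rfl
  let S := (blk (delSub M p q)).submatrix id s
  let T := (blk E).submatrix s id
  have hST : S * T = 1 := by
    rw [Matrix.submatrix_mul_equiv, ← blk_mul, h1, blk_one, Matrix.submatrix_id_id]
  let _ : Invertible S := ⟨T, mul_eq_one_comm.1 hST, hST⟩
  have hinv : ⅟S = T := rfl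
  have hT : (blk R).submatrix id s * T = blk (R * E) := by
    rw [Matrix.submatrix_mul_equiv, ← blk_mul, Matrix.submatrix_id_id]
  rw [bigD_eq M hIJ ((Equiv.sumProdDistrib _ _ _).symm.trans (f.prodCongr (Equiv.refl (Fin 2))))
    (((Equiv.sumCongr s (Equiv.refl _)).trans (Equiv.sumProdDistrib _ _ _).symm).trans
      (g.prodCongr (Equiv.refl (Fin 2)))),
    bigD_eq (delSub M p q) ⟨e⟩ (Equiv.refl _) s]
  have hb : (blk M).submatrix
      ((Equiv.sumProdDistrib _ _ _).symm.trans (f.prodCongr (Equiv.refl (Fin 2))))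
      (((Equiv.sumCongr s (Equiv.refl _)).trans (Equiv.sumProdDistrib _ _ _).symm).trans
      (g.prodCongr (Equiv.refl (Fin 2)))) =
      Matrix.fromBlocks S (blk C) ((blk R).submatrix id s) (blk D) := by
    ext (x | x) (y | y) <;> rfl
  rw [hb, Matrix.det_fromBlocks₁₁, hinv, hT, ← blk_mul, ← blk_sub, hD, norm_mul, mul_comm]
  congr 1
  rw [← norm_det_toC, ← Matrix.det_submatrix_equiv_self (Equiv.punitProd (Fin 2)).symm]
  rfl

/-! ### Quasideterminants and entries of the inverse -/

/-- Quasideterminants are inverses of the entries of the inverse matrix: in `M' * M = 1`, row `q`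
of `M'` away from `p` is eliminated with the inverse of `M^{pq}`. -/
lemma inv_mul_qdet_s11 {R : Type*} [Ring R] {I J : Type*} [Fintype I] [Fintype J] [DecidableEq I]
    [DecidableEq J] (M : Matrix I J R) (M' : Matrix J I R) (hM' : M' * M = 1) (p : I) (q : J)
    (hM : HasTwoSidedInv (delSub M p q)) : M' q p * qdet M p q = 1 := by
  have hq : qdet M p q = M p q - ∑ p' : {p' : I // p' ≠ p}, ∑ q' : {q' : J // q' ≠ q},
      M p q'.val * hM.choose q' p' * M p'.val q := by
    unfold qdet
    exact dif_pos hM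
  obtain ⟨h1, h2⟩ := hM.choose_spec
  generalize hM.choose = E at hq h1 h2
  -- Row `p` of `M`, column `q` of `M` and row `q` of the inverse, each without its pivot entry.
  let r : {q' : J // q' ≠ q} → R := fun q' => M p q'
  let c : {p' : I // p' ≠ p} → R := fun p' => M p' q
  let u : {p' : I // p' ≠ p} → R := fun p' => M' q p'
  have key : ∀ j, M' q p * M p j + ∑ p' : {p' : I // p' ≠ p}, M' q p' * M p' j =
      (1 : Matrix J J R) q j := by
    intro j
    rw [← hM', Matrix.mul_apply, Fintype.sum_eq_add_sum_subtype_ne _ p]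
  have k1 : M' q p * M p q = 1 - u ⬝ᵥ c := by
    have := key q
    rw [Matrix.one_apply_eq] at this
    exact eq_sub_of_add_eq this
  have k2 : M' q p • r = -(u ᵥ* delSub M p q) := by
    ext j
    have := key j
    rw [Matrix.one_apply_ne j.2.symm] at this
    exact eq_neg_of_add_eq_zero_left this
  have hq' : qdet M p q = M p q - (r ᵥ* E) ⬝ᵥ c := by
    rw [hq]
    simp only [dotProduct, Matrix.vecMul, Finset.sum_mul]
    rfl
  have : M' q p * ((r ᵥ* E) ⬝ᵥ c) = -(u ⬝ᵥ c) := by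
    rw [← smul_eq_mul, ← smul_dotProduct, ← Matrix.smul_vecMul, k2, Matrix.neg_vecMul,
      Matrix.vecMul_vecMul, h1, Matrix.vecMul_one, neg_dotProduct]
  rw [hq', mul_sub, k1, this]
  simp

/-! ### Identification of the norm with the complex determinant -/

lemma HasTwoSidedInv.submatrix_equiv {R : Type*} [Ring R] {I J I' J' : Type*} [Fintype I]
    [Fintype J] [DecidableEq I] [DecidableEq J] [Fintype I'] [Fintype J'] [DecidableEq I']
    [DecidableEq J'] {M : Matrix I J R} (hM : HasTwoSidedInv M) (f : I' ≃ I) (g : J' ≃ J) :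
    HasTwoSidedInv (M.submatrix f g) := by
  obtain ⟨B, h1, h2⟩ := hM
  exact ⟨B.submatrix g f, by simp [Matrix.submatrix_mul_equiv, h1],
    by simp [Matrix.submatrix_mul_equiv, h2]⟩

/-- Genericity, phrased for arbitrary injective selections of rows and columns. -/
lemma Generic.submatrix {R : Type*} [Ring R] {n : ℕ} {A : Matrix (Fin n) (Fin n) R}
    (hA : Generic A) {I J : Type*} [Fintype I] [Fintype J] [DecidableEq I] [DecidableEq J]
    (f : I → Fin n) (g : J → Fin n) (hf : f.Injective) (hg : g.Injective)
    (hIJ : Fintype.card I = Fintype.card J) : HasTwoSidedInv (A.submatrix f g) := by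
  let S := Finset.univ.map ⟨f, hf⟩
  let T := Finset.univ.map ⟨g, hg⟩
  let ef : I ≃ {p // p ∈ S} := Equiv.ofBijective (fun x => ⟨f x, by simp [S]⟩)
    ⟨fun a b h => hf (congrArg Subtype.val h), fun ⟨y, hy⟩ => by
      obtain ⟨x, -, hx⟩ := Finset.mem_map.1 hy
      exact ⟨x, Subtype.ext hx⟩⟩
  let eg : J ≃ {p // p ∈ T} := Equiv.ofBijective (fun x => ⟨g x, by simp [T]⟩)
    ⟨fun a b h => hg (congrArg Subtype.val h), fun ⟨y, hy⟩ => by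
      obtain ⟨x, -, hx⟩ := Finset.mem_map.1 hy
      exact ⟨x, Subtype.ext hx⟩⟩
  exact (hA S T (by simp [S, T, hIJ])).submatrix_equiv ef eg

lemma prod_telescope (m : ℕ) (F : ℕ → ℝ) (g : Fin m → ℝ)
    (h : ∀ k : Fin m, F k = g k * F (k + 1)) : F 0 = (∏ k, g k) * F m := by
  induction m with
  | zero => simp
  | succ m ih =>
    rw [ih (fun k => g k.castSucc) (fun k => h k.castSucc), Fin.prod_univ_castSucc, mul_assoc]
    congr 1
    exact h (Fin.last m)

/-- Only invertibility of the trailing principal submatrices is needed; the norm is the telescoping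
product of the Schur complement factors at the successive corners `(k,k)`. -/
lemma nuMat_eq_bigD {m : ℕ} (C : Matrix (Fin m) (Fin m) ℍ[ℝ])
    (hC : ∀ t : ℕ, HasTwoSidedInv (C.submatrix (Subtype.val : {p : Fin m // t ≤ p.val} → Fin m)
      (Subtype.val : {p : Fin m // t ≤ p.val} → Fin m))) :
    nuMat C = bigD C := by
  let F : ℕ → ℝ := fun t => bigD (C.submatrix (Subtype.val : {p : Fin m // t ≤ p.val} → Fin m)
      (Subtype.val : {p : Fin m // t ≤ p.val} → Fin m))
  have h0 : F 0 = bigD C :=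
    bigD_submatrix C ⟨Equiv.refl _⟩ (Equiv.subtypeUnivEquiv fun _ => Nat.zero_le _)
      (Equiv.subtypeUnivEquiv fun _ => Nat.zero_le _)
  have hm : F m = 1 := by
    have : IsEmpty {p : Fin m // m ≤ p.val} := ⟨fun x => absurd x.1.2 (not_lt.2 x.2)⟩
    simp only [F]
    rw [bigD_eq _ ⟨Equiv.refl _⟩ (Equiv.refl _) (Equiv.refl _), Matrix.det_isEmpty, norm_one]
  rw [← h0, prod_telescope m F (fun k => Quaternion.normSq (ykQdet C k)), hm, mul_one, nuMat]
  intro k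
  let s : {x : {p : Fin m // k ≤ p} // x ≠ ⟨k, le_refl k⟩} ≃ {p : Fin m // k.val + 1 ≤ p.val} :=
    { toFun := fun x => ⟨x.1.1, Nat.lt_of_le_of_ne x.1.2 fun h =>
        x.2 (Subtype.ext (Fin.ext h.symm))⟩
      invFun := fun y => ⟨⟨y.1, Nat.le_of_succ_le y.2⟩, fun h => by
        have h1 := congrArg (fun z => z.1.val) h
        have h2 := y.2
        simp only at h1
        omega⟩
      left_inv := fun _ => rfl
      right_inv := fun _ => rfl }
  have hd : delSub (C.submatrix (Subtype.val : {p : Fin m // k ≤ p} → Fin m)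
      (Subtype.val : {q : Fin m // k ≤ q} → Fin m)) ⟨k, le_refl k⟩ ⟨k, le_refl k⟩ =
      (C.submatrix (Subtype.val : {p : Fin m // k.val + 1 ≤ p.val} → Fin m)
      (Subtype.val : {p : Fin m // k.val + 1 ≤ p.val} → Fin m)).submatrix s s := rfl
  have := bigD_schur (C.submatrix (Subtype.val : {p : Fin m // k ≤ p} → Fin m)
    (Subtype.val : {q : Fin m // k ≤ q} → Fin m)) ⟨Equiv.refl _⟩ ⟨k, le_refl k⟩ ⟨k, le_refl k⟩
    (by rw [hd]; exact (hC _).submatrix_equiv s s)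
  rw [hd, bigD_submatrix _ ⟨Equiv.refl _⟩] at this
  exact this

lemma nuMat_of_eq_bigD {n m : ℕ} {A : Matrix (Fin n) (Fin n) ℍ[ℝ]} (hA : Generic A)
    (σ τ : Fin m → Fin n) (hσ : σ.Injective) (hτ : τ.Injective) :
    nuMat (Matrix.of fun p q => A (σ p) (τ q)) = bigD (A.submatrix σ τ) :=
  nuMat_eq_bigD _ fun _ => hA.submatrix (σ ∘ Subtype.val) (τ ∘ Subtype.val)
    (hσ.comp Subtype.val_injective) (hτ.comp Subtype.val_injective) rfl

/-- Here the rows in `S` and the columns in `T` may be relabeled by arbitrary types, since `bigD`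
does not see the order in which rows and columns are listed. -/
lemma nuOfSub_eq_bigD {n : ℕ} {A : Matrix (Fin n) (Fin n) ℍ[ℝ]} (hA : Generic A)
    {S T : Finset (Fin n)} (h : S.card = T.card) {I J : Type*} [Fintype I] [Fintype J]
    [DecidableEq I] [DecidableEq J] (f : I ≃ {p // p ∈ S}) (g : J ≃ {q // q ∈ T}) :
    nuOfSub A S T = bigD (A.submatrix (fun x => (f x).val) (fun x => (g x).val)) := by
  have hST : Nonempty ({p // p ∈ S} ≃ {q // q ∈ T}) := ⟨Fintype.equivOfCardEq (by simpa using h)⟩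
  rw [nuOfSub, dif_pos h]
  refine (nuMat_of_eq_bigD hA _ _
    (Subtype.val_injective.comp (S.orderIsoOfFin rfl).injective)
    (Subtype.val_injective.comp (T.orderIsoOfFin h.symm).injective)).trans ?_
  exact (bigD_submatrix (A.submatrix (Subtype.val : {p // p ∈ S} → _)
    (Subtype.val : {p // p ∈ T} → _)) hST (S.orderIsoOfFin rfl).toEquiv
    (T.orderIsoOfFin h.symm).toEquiv).trans
    (bigD_submatrix (A.submatrix (Subtype.val : {p // p ∈ S} → _)
    (Subtype.val : {p // p ∈ T} → _)) hST f g).symm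

/-- With `Q_{ij}(A) = |A|_{ij} ν(A^{ij})`, one has
`Q_{ij}(A) = ν(A^{ij}) a_{ij} − Σ_{p≠i, q≠j} a_{iq} conj(Q_{pq}(A^{ij})) a_{pj}`,
where `Q_{pq}(A^{ij}) = |A^{ij}|_{pq} ν((A^{ij})^{pq})` is formed inside `A^{ij}` at the
position with original labels `(p,q)`. -/
theorem Q_recursion {n : ℕ} (hn : 2 ≤ n)
    (A : Matrix (Fin n) (Fin n) ℍ[ℝ]) (hA : Generic A) (i j : Fin n) :
    qdet A i j * (↑(nuOfSub A (Finset.univ.erase i) (Finset.univ.erase j)) : ℍ[ℝ]) =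
      (↑(nuOfSub A (Finset.univ.erase i) (Finset.univ.erase j)) : ℍ[ℝ]) * A i j -
        ∑ p : {p : Fin n // p ≠ i}, ∑ q : {q : Fin n // q ≠ j},
          A i q.val *
            star (qdet (delSub A i j) p q *
              (↑(nuOfSub A ((Finset.univ.erase i).erase p.val)
                ((Finset.univ.erase j).erase q.val)) : ℍ[ℝ])) *
            A p.val j := by
  have hcard : Fintype.card {p : Fin n // p ≠ i} = Fintype.card {q : Fin n // q ≠ j} :=
    card_ne_congr rfl i j
  have hdef : HasTwoSidedInv (delSub A i j) :=
    hA.submatrix _ _ Subtype.val_injective Subtype.val_injective hcard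
  have hN : nuOfSub A (Finset.univ.erase i) (Finset.univ.erase j) = bigD (delSub A i j) :=
    nuOfSub_eq_bigD hA (by simp) (Equiv.subtypeEquivRight (by simp))
      (Equiv.subtypeEquivRight (by simp))
  have hq : qdet A i j = A i j - ∑ p : {p // p ≠ i}, ∑ q : {q // q ≠ j},
      A i q.val * hdef.choose q p * A p.val j := by
    unfold qdet
    exact dif_pos hdef
  obtain ⟨-, hB⟩ := hdef.choose_spec
  generalize hdef.choose = B at hq hB
  rw [hq, ← Quaternion.coe_commutes, mul_sub]
  congr 1
  simp only [Finset.mul_sum]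
  refine Finset.sum_congr rfl fun p _ => Finset.sum_congr rfl fun q _ => ?_
  have hcard' : Fintype.card {x : {p : Fin n // p ≠ i} // x ≠ p} =
      Fintype.card {x : {q : Fin n // q ≠ j} // x ≠ q} :=
    card_ne_congr hcard p q
  have hdef' : HasTwoSidedInv (delSub (delSub A i j) p q) :=
    hA.submatrix (fun x : {x : {p : Fin n // p ≠ i} // x ≠ p} => x.1.1)
      (fun x : {x : {q : Fin n // q ≠ j} // x ≠ q} => x.1.1)
      (Subtype.val_injective.comp Subtype.val_injective)
      (Subtype.val_injective.comp Subtype.val_injective) hcard'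
  have hN' : nuOfSub A ((Finset.univ.erase i).erase p.val) ((Finset.univ.erase j).erase q.val) =
      bigD (delSub (delSub A i j) p q) := by
    have hs : ∀ (i : Fin n) (p : {p : Fin n // p ≠ i}) (x : Fin n),
        (∃ h : x ≠ i, (⟨x, h⟩ : {p : Fin n // p ≠ i}) ≠ p) ↔
          x ∈ (Finset.univ.erase i).erase p.val := by
      intro i p x
      simp [Subtype.ext_iff, and_comm]
    exact nuOfSub_eq_bigD hA
      (by simp [Finset.card_erase_of_mem, p.2, q.2])
      ((Equiv.subtypeSubtypeEquivSubtypeExists _ _).trans (Equiv.subtypeEquivRight (hs i p)))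
      ((Equiv.subtypeSubtypeEquivSubtypeExists _ _).trans (Equiv.subtypeEquivRight (hs j q)))
  have hd := inv_mul_qdet_s11 (delSub A i j) B hB p q hdef'
  have hS := bigD_schur (delSub A i j) ⟨Fintype.equivOfCardEq hcard⟩ p q hdef'
  rw [hN, hN', hS]
  generalize qdet (delSub A i j) p q = d at hd
  generalize bigD (delSub (delSub A i j) p q) = ν
  -- `B q p * d = 1` turns `ν(d) = d * star d` into `star d` after multiplication by `B q p`.
  have key : ((Quaternion.normSq d * ν : ℝ) : ℍ[ℝ]) * B q p = star (d * (ν : ℍ[ℝ])) := by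
    rw [Quaternion.coe_commutes, Quaternion.coe_mul, ← Quaternion.self_mul_star, ← mul_assoc,
      ← mul_assoc, hd, one_mul, star_mul, Quaternion.star_coe, Quaternion.coe_commutes]
  rw [← key, ← mul_assoc, ← mul_assoc, ← mul_assoc, Quaternion.coe_commutes _ (A i q.val)]
end
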